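/- Trade-off constraint for the C-CPPG: let m ≥ n and k be positive integers and let T ≥ 2 be an integer. Suppose F(1), …, F(T) are points of ℤ² such that every point of the rectangle [0,n] × [0,m] is within l1 distance k of some F(i), and let L = ∑_{i=1}^{T−1} dist₁(F(i), F(i+1)) be the path length. Then (T−1)·f_LB-C(L/(T−1)) ≥ mn − 2k². -/

import Mathlib

/-!
The stops sweep out the `l1` balls of radius `k` around them, so the area `m * n` of the rectangle is
at most the area `2k²` of the first ball plus the areas of the differences of consecutive balls.

In the coordinates `u = x + y`, `v = x - y`, which double areas, an `l1` ball of radius `k` is an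
axis-parallel square of side `2k`, and two centres at `l1` distance `d` are displaced by at most `d`
in each coordinate. The two squares thus meet in area at least `(2k - d)²` when `d ≤ 2k`, and the
second ball adds area at most `f(d) = d(2k - d/2)`, or `2k²` when `d > 2k`
(`volume_square_diff_le`).

Since distances between lattice points are integers, and the chord of the concave function `f` over
`[j, j + 1]` lies above `f` at every integer (`stepGain_le_chord`), summing the chord at
`j = ⌊L / (T - 1)⌋` yields the Jensen-type bound `∑ f(dᵢ) ≤ (T - 1) * fLBC (L / (T - 1))`.
-/

open Finset

/-- l1 distance on ℝ². -/
noncomputable def dist1 (p q : ℝ × ℝ) : ℝ := |p.1 - q.1| + |p.2 - q.2|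

/-- Embedding of an integer point into ℝ². -/
def toReal2 (z : ℤ × ℤ) : ℝ × ℝ := ((z.1 : ℝ), (z.2 : ℝ))

/-- The piecewise-linear lower-bound function `f_LB-C` for the C-CPPG: it agrees
with `f(d) = d(2k − d/2)` at every integer `0 ≤ d ≤ 2k`, equals `2k²` for
`d ≥ 2k`, and interpolates linearly between consecutive integers. -/
noncomputable def fLBC (k : ℕ) (d : ℝ) : ℝ :=
  if 2 * (k : ℝ) ≤ d then 2 * (k : ℝ) ^ 2
  else ((⌊d⌋ : ℝ) + 1 - d) * ((⌊d⌋ : ℝ) * (2 * (k : ℝ) - (⌊d⌋ : ℝ) / 2)) +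
       (d - (⌊d⌋ : ℝ)) * (((⌊d⌋ : ℝ) + 1) * (2 * (k : ℝ) - ((⌊d⌋ : ℝ) + 1) / 2))

open MeasureTheory

/-- The function `f`: `d(2k - d/2)` up to `d = 2k`, constantly `2k²` beyond. -/
noncomputable def stepGain (k : ℕ) (d : ℝ) : ℝ :=
  if d ≤ 2 * (k : ℝ) then d * (2 * (k : ℝ) - d / 2) else 2 * (k : ℝ) ^ 2

lemma stepGain_le (k : ℕ) (d : ℝ) : stepGain k d ≤ 2 * (k : ℝ) ^ 2 := by
  unfold stepGain
  split_ifs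
  · nlinarith [sq_nonneg (d - 2 * k)]
  · exact le_rfl

/-- At integers, `f` lies below each of its chords over `[j, j + 1]` with `j + 1 ≤ 2k`: the
difference is `(d - j)(d - j - 1) / 2` for `d ≤ 2k`, and the chord is increasing. -/
lemma stepGain_le_chord (k : ℕ) (j d : ℤ) (hj : j + 1 ≤ 2 * (k : ℤ)) :
    stepGain k d ≤ (j : ℝ) * (2 * (k : ℝ) - (j : ℝ) / 2)
      + ((d : ℝ) - j) * (2 * (k : ℝ) - (2 * (j : ℝ) + 1) / 2) := by
  have key : ∀ e : ℤ, (0 : ℝ) ≤ ((e : ℝ) - j) * ((e : ℝ) - j - 1) := by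
    intro e
    have h : 0 ≤ (e - j) * (e - j - 1) := by
      rcases le_or_gt e j with h | h
      · exact mul_nonneg_of_nonpos_of_nonpos (by omega) (by omega)
      · exact mul_nonneg (by omega) (by omega)
    exact_mod_cast h
  have hj' : (j : ℝ) + 1 ≤ 2 * (k : ℝ) := by exact_mod_cast hj
  unfold stepGain
  split_ifs with h
  · nlinarith [key d]
  · have h2 := key (2 * k)
    push_cast at h2
    have h3 : 0 ≤ ((d : ℝ) - 2 * k) * (2 * (k : ℝ) - (2 * (j : ℝ) + 1) / 2) :=
      mul_nonneg (by linarith) (by linarith)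
    nlinarith

/-- The `l1` ball of radius `k` around a lattice point, in the coordinates `(x + y, x - y)`. -/
def square (k : ℕ) (z : ℤ × ℤ) : Set (ℝ × ℝ) :=
  Set.Icc ((z.1 : ℝ) + z.2 - k) (z.1 + z.2 + k) ×ˢ Set.Icc ((z.1 : ℝ) - z.2 - k) (z.1 - z.2 + k)

/-- The linear map sending `(x + y, x - y)` back to `(x, y)`. -/
noncomputable def unrotate : ℝ × ℝ →ₗ[ℝ] ℝ × ℝ :=
  Matrix.toLin (Module.Basis.finTwoProd ℝ) (Module.Basis.finTwoProd ℝ) !![1/2, 1/2; 1/2, -1/2]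

lemma unrotate_apply (p : ℝ × ℝ) : unrotate p = ((p.1 + p.2) / 2, (p.1 - p.2) / 2) := by
  rw [unrotate, Matrix.toLin_finTwoProd_apply]
  ext <;> simp <;> ring

lemma det_unrotate : LinearMap.det unrotate = -1 / 2 := by
  rw [unrotate, LinearMap.det_toLin, Matrix.det_fin_two_of]
  norm_num

lemma mem_square_of_dist1_le (k : ℕ) (z : ℤ × ℤ) (p : ℝ × ℝ)
    (h : dist1 (unrotate p) (toReal2 z) ≤ k) : p ∈ square k z := by
  simp only [unrotate_apply, dist1, toReal2] at h
  simp only [square, Set.mem_prod, Set.mem_Icc]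
  have h1 := le_abs_self ((p.1 + p.2) / 2 - z.1)
  have h2 := neg_abs_le ((p.1 + p.2) / 2 - z.1)
  have h3 := le_abs_self ((p.1 - p.2) / 2 - z.2)
  have h4 := neg_abs_le ((p.1 - p.2) / 2 - z.2)
  refine ⟨⟨?_, ?_⟩, ?_, ?_⟩ <;> linarith

lemma volume_square (k : ℕ) (z : ℤ × ℤ) : volume.real (square k z) = 4 * (k : ℝ) ^ 2 := by
  have hk : (0 : ℝ) ≤ k := k.cast_nonneg
  rw [square, Measure.volume_eq_prod, measureReal_prod_prod,
    Real.volume_real_Icc_of_le (by linarith), Real.volume_real_Icc_of_le (by linarith)]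
  ring

lemma measurableSet_square (k : ℕ) (z : ℤ × ℤ) : MeasurableSet (square k z) :=
  measurableSet_Icc.prod measurableSet_Icc

lemma volume_square_ne_top (k : ℕ) (z : ℤ × ℤ) : volume (square k z) ≠ ⊤ :=
  (isCompact_Icc.prod isCompact_Icc).measure_lt_top.ne

/-- Two intervals of radius `r` with centres at most `d` apart overlap in length `≥ 2r - d`. -/
lemma le_volume_Icc_inter (a b r d : ℝ) (h : |a - b| ≤ d) :
    2 * r - d ≤ volume.real (Set.Icc (b - r) (b + r) ∩ Set.Icc (a - r) (a + r)) := by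
  rw [Set.Icc_inter_Icc, Real.volume_real_Icc]
  obtain ⟨h1, h2⟩ := abs_le.mp h
  refine le_max_of_le_left ?_
  rcases le_total a b with hab | hab
  · rw [inf_eq_right.2 (by linarith), sup_eq_left.2 (by linarith)]
    linarith
  · rw [inf_eq_left.2 (by linarith), sup_eq_right.2 (by linarith)]
    linarith

/-- Moving a ball by distance `d` adds area at most `f(d)`, which is doubled by the rotated
coordinates. -/
lemma volume_square_diff_le (k : ℕ) (z w : ℤ × ℤ) :
    volume.real (square k w \ square k z)
      ≤ 2 * stepGain k (dist1 (toReal2 z) (toReal2 w)) := by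
  have hsum := measureReal_sdiff_add_inter (s := square k w) (measurableSet_square k z)
    (h := volume_square_ne_top k w)
  rw [volume_square] at hsum
  unfold stepGain
  split_ifs with hd
  · have h1 : |((z.1 : ℝ) + z.2) - (w.1 + w.2)| ≤ dist1 (toReal2 z) (toReal2 w) := by
      simp only [dist1, toReal2]
      rw [show ((z.1 : ℝ) + z.2) - (w.1 + w.2) = (z.1 - w.1) + (z.2 - w.2) by ring]
      exact abs_add_le _ _
    have h2 : |((z.1 : ℝ) - z.2) - (w.1 - w.2)| ≤ dist1 (toReal2 z) (toReal2 w) := by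
      simp only [dist1, toReal2]
      rw [show ((z.1 : ℝ) - z.2) - (w.1 - w.2) = (z.1 - w.1) - (z.2 - w.2) by ring]
      exact abs_sub _ _
    have hinter : (2 * (k : ℝ) - dist1 (toReal2 z) (toReal2 w)) ^ 2
        ≤ volume.real (square k w ∩ square k z) := by
      rw [square, square, Set.prod_inter_prod, Measure.volume_eq_prod, measureReal_prod_prod, sq]
      exact mul_le_mul (le_volume_Icc_inter _ _ _ _ h1) (le_volume_Icc_inter _ _ _ _ h2)
        (by linarith) measureReal_nonneg
    nlinarith
  · have := measureReal_nonneg (μ := volume) (s := square k w ∩ square k z)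
    linarith

lemma volume_unrotate_preimage (a b : ℝ) (ha : 0 ≤ a) (hb : 0 ≤ b) :
    volume.real (unrotate ⁻¹' (Set.Icc 0 a ×ˢ Set.Icc 0 b)) = 2 * (b * a) := by
  rw [measureReal_def, Measure.addHaar_preimage_linearMap _ (by rw [det_unrotate]; norm_num),
    ENNReal.toReal_mul, ← measureReal_def, Measure.volume_eq_prod, measureReal_prod_prod,
    Real.volume_real_Icc_of_le ha, Real.volume_real_Icc_of_le hb, det_unrotate,
    ENNReal.toReal_ofReal (abs_nonneg _)]
  norm_num
  ring

/-- A point of a union of sets lies in the first one, or is new at some later step. -/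
lemma mem_first_or_new {α : Type*} (B : ℕ → Set α) (p : α) (T : ℕ)
    (h : ∃ i ∈ Finset.Icc 1 T, p ∈ B i) :
    p ∈ B 1 ∪ ⋃ i ∈ Finset.Ico 1 T, (B (i + 1) \ B i) := by
  induction T with
  | zero => simp at h
  | succ t ih =>
    obtain ⟨i, hi, hp⟩ := h
    rw [Finset.mem_Icc] at hi
    by_cases hprev : ∃ i ∈ Finset.Icc 1 t, p ∈ B i
    · rcases ih hprev with h | h
      · exact Or.inl h
      · right
        simp only [Set.mem_iUnion, Finset.mem_Ico] at h ⊢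
        obtain ⟨i, hi, h⟩ := h
        exact ⟨i, ⟨hi.1, by omega⟩, h⟩
    · have hi' : i = t + 1 := by
        by_contra hne
        exact hprev ⟨i, Finset.mem_Icc.2 ⟨hi.1, by omega⟩, hp⟩
      subst hi'
      rcases Nat.eq_zero_or_pos t with rfl | ht
      · exact Or.inl hp
      · right
        simp only [Set.mem_iUnion, Finset.mem_Ico]
        exact ⟨t, ⟨ht, by omega⟩, hp, fun h => hprev ⟨t, Finset.mem_Icc.2 ⟨ht, le_rfl⟩, h⟩⟩

theorem stmt_13 (m n k : ℕ) (hm : 0 < m) (hn : 0 < n) (hmn : n ≤ m) (hk : 0 < k)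
    (T : ℕ) (hT : 2 ≤ T) (F : ℕ → ℤ × ℤ)
    (hcov : ∀ p : ℝ × ℝ, 0 ≤ p.1 → p.1 ≤ (n : ℝ) → 0 ≤ p.2 → p.2 ≤ (m : ℝ) →
      ∃ i ∈ Finset.Icc 1 T, dist1 p (toReal2 (F i)) ≤ (k : ℝ))
    (L : ℝ) (hL : L = ∑ i ∈ Finset.Ico 1 T, dist1 (toReal2 (F i)) (toReal2 (F (i + 1)))) :
    (T - 1 : ℝ) * fLBC k (L / (T - 1 : ℝ)) ≥ (m : ℝ) * n - 2 * (k : ℝ) ^ 2 := by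
  have hT' : (2 : ℝ) ≤ T := by exact_mod_cast hT
  have hN : (0 : ℝ) < (T : ℝ) - 1 := by linarith
  have hcard : ((Finset.Ico 1 T).card : ℝ) = (T : ℝ) - 1 := by
    rw [Nat.card_Ico, Nat.cast_sub (by omega), Nat.cast_one]
  -- Area bound, in the rotated coordinates where every area is doubled.
  have harea : (m : ℝ) * n ≤ 2 * (k : ℝ) ^ 2
      + ∑ i ∈ Finset.Ico 1 T, stepGain k (dist1 (toReal2 (F i)) (toReal2 (F (i + 1)))) := by
    have hsub : unrotate ⁻¹' (Set.Icc 0 (n : ℝ) ×ˢ Set.Icc 0 (m : ℝ)) ⊆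
        square k (F 1) ∪ ⋃ i ∈ Finset.Ico 1 T, (square k (F (i + 1)) \ square k (F i)) := by
      rintro p ⟨h1, h2⟩
      obtain ⟨i, hi, h⟩ := hcov (unrotate p) h1.1 h1.2 h2.1 h2.2
      exact mem_first_or_new (fun i => square k (F i)) p T
        ⟨i, hi, mem_square_of_dist1_le k (F i) p h⟩
    have hfin : volume (square k (F 1) ∪
        ⋃ i ∈ Finset.Ico 1 T, (square k (F (i + 1)) \ square k (F i))) ≠ ⊤ := by
      refine measure_union_ne_top (volume_square_ne_top _ _) ?_
      refine (measure_biUnion_lt_top (Finset.finite_toSet _) fun i _ => ?_).ne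
      exact (measure_mono Set.sdiff_subset).trans_lt (volume_square_ne_top k (F (i + 1))).lt_top
    have h1 := measureReal_mono hsub hfin
    rw [volume_unrotate_preimage _ _ n.cast_nonneg m.cast_nonneg] at h1
    have h2 := measureReal_union_le (μ := volume) (square k (F 1))
      (⋃ i ∈ Finset.Ico 1 T, (square k (F (i + 1)) \ square k (F i)))
    have h3 := measureReal_biUnion_finset_le (μ := volume) (Finset.Ico 1 T)
      (fun i => square k (F (i + 1)) \ square k (F i))
    have h4 := Finset.sum_le_sum fun i (_ : i ∈ Finset.Ico 1 T) =>
      volume_square_diff_le k (F i) (F (i + 1))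
    rw [← Finset.mul_sum] at h4
    rw [volume_square] at h2
    linarith
  have hjensen : ∑ i ∈ Finset.Ico 1 T, stepGain k (dist1 (toReal2 (F i)) (toReal2 (F (i + 1))))
      ≤ ((T : ℝ) - 1) * fLBC k (L / ((T : ℝ) - 1)) := by
    unfold fLBC
    split_ifs with hx
    · refine (Finset.sum_le_sum fun i _ => stepGain_le k _).trans ?_
      rw [Finset.sum_const, nsmul_eq_mul, hcard]
    · set x := L / ((T : ℝ) - 1) with hxdef
      have hLx : L = ((T : ℝ) - 1) * x := by rw [hxdef]; field_simp
      have hj : ⌊x⌋ + 1 ≤ 2 * (k : ℤ) := by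
        have : ⌊x⌋ < 2 * (k : ℤ) := Int.floor_lt.2 (by push_cast; exact not_le.1 hx)
        omega
      have hstep : ∀ i ∈ Finset.Ico 1 T,
          stepGain k (dist1 (toReal2 (F i)) (toReal2 (F (i + 1)))) ≤
          (⌊x⌋ : ℝ) * (2 * (k : ℝ) - (⌊x⌋ : ℝ) / 2)
            + (dist1 (toReal2 (F i)) (toReal2 (F (i + 1))) - ⌊x⌋)
              * (2 * (k : ℝ) - (2 * (⌊x⌋ : ℝ) + 1) / 2) := by
        intro i _
        have h := stepGain_le_chord k ⌊x⌋
          (|(F i).1 - (F (i + 1)).1| + |(F i).2 - (F (i + 1)).2|) hj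
        push_cast at h
        exact h
      refine (Finset.sum_le_sum hstep).trans (le_of_eq ?_)
      rw [Finset.sum_add_distrib, Finset.sum_const, ← Finset.sum_mul, Finset.sum_sub_distrib, ← hL,
        Finset.sum_const, nsmul_eq_mul, nsmul_eq_mul, hcard, hLx]
      ring
  linarith
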